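/- Let n be a positive integer and let k be an integer with 0 ≤ k and p := k/n < 1/2. Then α·β·C(n,k) ≤ Σ_{i=0}^{k} C(n,i) ≤ α·C(n,k), where α = (1 − p + 1/n)/(1 − 2p + 1/n) and β = (1 − 2p)² / ((1 − 2p)² + 1/n). -/

import Mathlib

/-!
Put `S k = ∑ i ≤ k, C(n,i)` and `r k = C(n,k-1) / C(n,k) = k / (n - k + 1)`. The normalized sums
`S k / C(n,k)` solve the recurrence `x 0 = 1`, `x (k + 1) = 1 + r (k + 1) * x k`, so every
subsolution bounds them from below and every supersolution from above. The number `α k` is the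
fixed point `1 / (1 - r k)` of `x ↦ 1 + r k * x`; since `α` increases with `k`, it is a
supersolution. That `α * β` is a subsolution is, in the variables `k` and `d = n - 2 * (k + 1)`,
a polynomial inequality: the difference of the two sides has only nonnegative coefficients.
-/

section ChooseSum

variable {𝕜 : Type*} [Field 𝕜]

/-- The factor `α = (1 - p + 1/n) / (1 - 2p + 1/n)` at `p = k/n`, with numerator and
denominator multiplied by `n`. For `2 * k < n + 1` it is the sum of the geometric series with ratio
`C(n,k-1) / C(n,k) = k / (n - k + 1)`. -/
def chooseSumFactor (n k : 𝕜) : 𝕜 := (n - k + 1) / (n - 2 * k + 1)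

/-- The correction `β = (1 - 2p)² / ((1 - 2p)² + 1/n)` at `p = k/n`, with numerator and
denominator multiplied by `n²`: the multiplicative gap between the upper and the lower bound. -/
def chooseSumCorrection (n k : 𝕜) : 𝕜 := (n - 2 * k) ^ 2 / ((n - 2 * k) ^ 2 + n)

theorem chooseSumFactor_div {n : 𝕜} (hn : n ≠ 0) (k : 𝕜) :
    (1 - k / n + 1 / n) / (1 - 2 * (k / n) + 1 / n) = chooseSumFactor n k := by
  rw [chooseSumFactor, ← mul_div_mul_left _ _ hn]
  congr 1 <;> field_simp

theorem chooseSumCorrection_div {n : 𝕜} (hn : n ≠ 0) (k : 𝕜) :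
    (1 - 2 * (k / n)) ^ 2 / ((1 - 2 * (k / n)) ^ 2 + 1 / n) = chooseSumCorrection n k := by
  rw [chooseSumCorrection, ← mul_div_mul_left _ _ (pow_ne_zero 2 hn)]
  congr 1 <;> field_simp

theorem one_add_mul_chooseSumFactor {n k : 𝕜} (h₁ : n - k + 1 ≠ 0) (h₂ : n - 2 * k + 1 ≠ 0) :
    1 + k / (n - k + 1) * chooseSumFactor n k = chooseSumFactor n k := by
  rw [chooseSumFactor, div_mul_div_cancel₀ h₁, one_add_div h₂]
  congr 1
  ring

theorem cast_choose_eq_div_mul_choose_succ [CharZero 𝕜] {n k : ℕ} (h : k < n) :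
    (n.choose k : 𝕜) = (k + 1) / (n - k) * n.choose (k + 1) := by
  have hnk : (n : 𝕜) - k ≠ 0 := sub_ne_zero.mpr (Nat.cast_injective.ne h.ne')
  have hrec : (n.choose (k + 1) : 𝕜) * (k + 1) = n.choose k * (n - k) := by
    rw [← Nat.cast_sub h.le]
    exact_mod_cast Nat.choose_succ_right_eq n k
  field_simp
  linear_combination -hrec

variable [LinearOrder 𝕜] [IsStrictOrderedRing 𝕜]

theorem mul_choose_le_sum_choose_of_le_recurrence {n m : ℕ} {f : ℕ → 𝕜} (hm : m ≤ n)
    (h_zero : f 0 ≤ 1) (h_succ : ∀ k < m, f (k + 1) ≤ 1 + (k + 1) / (n - k) * f k) :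
    f m * n.choose m ≤ ∑ i ∈ Finset.range (m + 1), (n.choose i : 𝕜) := by
  induction m with
  | zero => simpa using h_zero
  | succ m ih =>
    calc f (m + 1) * n.choose (m + 1)
        ≤ (1 + (m + 1) / (n - m) * f m) * n.choose (m + 1) := by
          gcongr
          exact h_succ m m.lt_succ_self
      _ = f m * n.choose m + n.choose (m + 1) := by
          rw [cast_choose_eq_div_mul_choose_succ hm]
          ring
      _ ≤ ∑ i ∈ Finset.range (m + 1), (n.choose i : 𝕜) + n.choose (m + 1) := by
          gcongr
          exact ih (by lia) fun k hk ↦ h_succ k (by lia)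
      _ = ∑ i ∈ Finset.range (m + 1 + 1), (n.choose i : 𝕜) := (Finset.sum_range_succ _ _).symm

theorem sum_choose_le_mul_choose_of_recurrence_le {n m : ℕ} {f : ℕ → 𝕜} (hm : m ≤ n)
    (h_zero : 1 ≤ f 0) (h_succ : ∀ k < m, 1 + (k + 1) / (n - k) * f k ≤ f (k + 1)) :
    ∑ i ∈ Finset.range (m + 1), (n.choose i : 𝕜) ≤ f m * n.choose m := by
  induction m with
  | zero => simpa using h_zero
  | succ m ih =>
    calc ∑ i ∈ Finset.range (m + 1 + 1), (n.choose i : 𝕜)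
        = ∑ i ∈ Finset.range (m + 1), (n.choose i : 𝕜) + n.choose (m + 1) :=
          Finset.sum_range_succ _ _
      _ ≤ f m * n.choose m + n.choose (m + 1) := by
          gcongr
          exact ih (by lia) fun k hk ↦ h_succ k (by lia)
      _ = (1 + (m + 1) / (n - m) * f m) * n.choose (m + 1) := by
          rw [cast_choose_eq_div_mul_choose_succ hm]
          ring
      _ ≤ f (m + 1) * n.choose (m + 1) := by
          gcongr
          exact h_succ m m.lt_succ_self

theorem chooseSumFactor_zero {n : 𝕜} (hn : 0 ≤ n) : chooseSumFactor n 0 = 1 := by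
  have : n + 1 ≠ 0 := by positivity
  simp [chooseSumFactor, this]

theorem chooseSumCorrection_le_one {n : 𝕜} (hn : 0 ≤ n) (k : 𝕜) : chooseSumCorrection n k ≤ 1 :=
  div_le_one_of_le₀ (le_add_of_nonneg_right hn) (by positivity)

theorem chooseSumFactor_le_chooseSumFactor {n k l : 𝕜} (hn : 0 ≤ n + 1) (hkl : k ≤ l)
    (hl : 0 < n - 2 * l + 1) : chooseSumFactor n k ≤ chooseSumFactor n l := by
  rw [chooseSumFactor, chooseSumFactor, div_le_div_iff₀ (by linarith) hl]
  linear_combination (n + 1) * hkl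

theorem one_add_mul_chooseSumFactor_le_succ {n k : 𝕜} (hk : 0 ≤ k) (hkn : 2 * (k + 1) ≤ n) :
    1 + (k + 1) / (n - k) * chooseSumFactor n k ≤ chooseSumFactor n (k + 1) := by
  have hnk : 0 < n - k := by linarith
  calc 1 + (k + 1) / (n - k) * chooseSumFactor n k
      ≤ 1 + (k + 1) / (n - k) * chooseSumFactor n (k + 1) := by
        gcongr
        exact chooseSumFactor_le_chooseSumFactor (by linarith) (by linarith) (by linarith)
    _ = chooseSumFactor n (k + 1) := by
        have hden : n - (k + 1) + 1 = n - k := by ring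
        simpa only [hden] using one_add_mul_chooseSumFactor (n := n) (k := k + 1)
          (by linarith) (by linarith)

theorem chooseSumFactor_mul_chooseSumCorrection_succ_le {n k : 𝕜} (hk : 0 ≤ k)
    (hkn : 2 * (k + 1) ≤ n) :
    chooseSumFactor n (k + 1) * chooseSumCorrection n (k + 1) ≤
      1 + (k + 1) / (n - k) * (chooseSumFactor n k * chooseSumCorrection n k) := by
  obtain ⟨d, hd, rfl⟩ : ∃ d, 0 ≤ d ∧ n = d + 2 * (k + 1) := ⟨n - 2 * (k + 1), by linarith, by ring⟩
  have hpoly : (d + k + 2) * d ^ 2 * ((d + k + 2) * ((d + 3) * ((d + 2) ^ 2 + (d + 2 * (k + 1))))) ≤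
      ((d + k + 2) * ((d + 3) * ((d + 2) ^ 2 + (d + 2 * (k + 1)))) +
        (k + 1) * ((d + k + 3) * (d + 2) ^ 2)) * ((d + 1) * (d ^ 2 + (d + 2 * (k + 1)))) := by
    rw [← sub_nonneg]
    ring_nf
    positivity
  have hfactor : chooseSumFactor (d + 2 * (k + 1)) k = (d + k + 3) / (d + 3) := by
    rw [chooseSumFactor]
    congr 1 <;> ring
  have hfactor_succ : chooseSumFactor (d + 2 * (k + 1)) (k + 1) = (d + k + 2) / (d + 1) := by
    rw [chooseSumFactor]
    congr 1 <;> ring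
  have hcorr : chooseSumCorrection (d + 2 * (k + 1)) k
      = (d + 2) ^ 2 / ((d + 2) ^ 2 + (d + 2 * (k + 1))) := by
    rw [chooseSumCorrection]
    congr 1 <;> ring
  have hcorr_succ : chooseSumCorrection (d + 2 * (k + 1)) (k + 1)
      = d ^ 2 / (d ^ 2 + (d + 2 * (k + 1))) := by
    rw [chooseSumCorrection]
    congr 1 <;> ring
  have hnk : d + 2 * (k + 1) - k = d + k + 2 := by ring
  rw [hfactor, hfactor_succ, hcorr, hcorr_succ, hnk, div_mul_div_comm, div_mul_div_comm,
    div_mul_div_comm, one_add_div (by positivity), div_le_div_iff₀ (by positivity) (by positivity)]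
  exact hpoly

theorem chooseSumFactor_mul_chooseSumCorrection_mul_choose_le_sum_choose {n k : ℕ}
    (hkn : 2 * k ≤ n) :
    chooseSumFactor (n : 𝕜) k * chooseSumCorrection (n : 𝕜) k * n.choose k ≤
      ∑ i ∈ Finset.range (k + 1), (n.choose i : 𝕜) := by
  refine mul_choose_le_sum_choose_of_le_recurrence
    (f := fun j ↦ chooseSumFactor (n : 𝕜) j * chooseSumCorrection (n : 𝕜) j) (by lia) ?_ ?_
  · simpa [chooseSumFactor_zero] using chooseSumCorrection_le_one (Nat.cast_nonneg n) (0 : 𝕜)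
  · intro j hj
    have hjn : (2 * (j + 1) : 𝕜) ≤ n := by exact_mod_cast (by lia : 2 * (j + 1) ≤ n)
    simpa using chooseSumFactor_mul_chooseSumCorrection_succ_le j.cast_nonneg hjn

theorem sum_choose_le_chooseSumFactor_mul_choose {n k : ℕ} (hkn : 2 * k ≤ n) :
    ∑ i ∈ Finset.range (k + 1), (n.choose i : 𝕜) ≤ chooseSumFactor (n : 𝕜) k * n.choose k := by
  refine sum_choose_le_mul_choose_of_recurrence_le
    (f := fun j ↦ chooseSumFactor (n : 𝕜) j) (by lia) ?_ ?_
  · simp [chooseSumFactor_zero]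
  · intro j hj
    have hjn : (2 * (j + 1) : 𝕜) ≤ n := by exact_mod_cast (by lia : 2 * (j + 1) ≤ n)
    simpa using one_add_mul_chooseSumFactor_le_succ j.cast_nonneg hjn

end ChooseSum

/-- For a positive integer `n` and integer `k ≥ 0` with `p = k/n < 1/2`,
`α·β·C(n,k) ≤ ∑_{i=0}^{k} C(n,i) ≤ α·C(n,k)`, where
`α = (1 − p + 1/n)/(1 − 2p + 1/n)` and `β = (1 − 2p)²/((1 − 2p)² + 1/n)`. -/
theorem binomial_partial_sum_bounds (n k : ℕ) (hn : 0 < n) (p α β : ℝ)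
    (hp : p = (k : ℝ) / n) (hhalf : p < 1 / 2)
    (hα : α = (1 - p + 1 / n) / (1 - 2 * p + 1 / n))
    (hβ : β = (1 - 2 * p) ^ 2 / ((1 - 2 * p) ^ 2 + 1 / n)) :
    α * β * (n.choose k : ℝ) ≤ ∑ i ∈ Finset.range (k + 1), (n.choose i : ℝ)
    ∧ ∑ i ∈ Finset.range (k + 1), (n.choose i : ℝ) ≤ α * (n.choose k : ℝ) := by
  have hn₀ : (0 : ℝ) < n := Nat.cast_pos.mpr hn
  have hkn : 2 * k ≤ n := by
    rw [hp, div_lt_iff₀ hn₀] at hhalf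
    exact_mod_cast (by linarith : (2 * k : ℝ) ≤ n)
  rw [hα, hβ, hp, chooseSumFactor_div hn₀.ne', chooseSumCorrection_div hn₀.ne']
  exact ⟨chooseSumFactor_mul_chooseSumCorrection_mul_choose_le_sum_choose hkn,
    sum_choose_le_chooseSumFactor_mul_choose hkn⟩
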